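/- arXiv:0710.0394 — 2 statements merged into one kernel-verified Lean document; each statement's English description precedes it below -/
import Mathlib

section
/- Let R be a principal ideal domain with field of fractions K, and let A, B be finitely generated R-modules. Then Ext¹_R(A, B) is isomorphic to Hom_R(T(A), K/R) ⊗_R B, where T(A) is the torsion submodule of A. -/
open CategoryTheory Opposite TensorProduct

/-- The first Ext group `Ext¹_R(A, B)` of `R`-modules, as an `R`-module. -/
noncomputable abbrev ext1 (R : Type) [CommRing R] (A B : Type) [AddCommGroup A]
    [Module R A] [AddCommGroup B] [Module R B] : ModuleCat R :=
  ((Ext R (ModuleCat R) 1).obj (op (ModuleCat.of R A))).obj (ModuleCat.of R B)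

/-!
Write `T` for the torsion submodule of `A`. The quotient `A / T` is finitely generated and
torsion-free, hence projective, so `A ≅ T × A / T`. For a resolution `0 → P₁ → P₀ → T → 0` by
finitely generated projectives, adding `A / T` to `P₀` resolves `A` without changing `P₁` or the
image of `Hom(P₀, B)` in `Hom(P₁, B)`. Therefore
`Ext¹(A, B) ≅ coker (Hom(P₀, B) → Hom(P₁, B)) ≅ coker (P₀* → P₁*) ⊗ B`.
Finally `coker (P₀* → P₁*) ≅ Hom(T, K/R)`: apply the snake lemma to the map from
`Hom(P₀, -)` to `Hom(P₁, -)` on `0 → R → K → K/R → 0`. The middle map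
`Hom(P₀, K) → Hom(P₁, K)` is bijective because a nonzerodivisor kills `T`.
-/

section CategoryTheory

universe w v u

variable {C : Type u} [Category.{v} C]

section

variable [Preadditive C] [Limits.HasZeroObject C] {X Y : C} (f : X ⟶ Y)

/-- The chain complex `⋯ ⟶ 0 ⟶ X ⟶ Y` given by `f`, with `Y` in degree `0`. -/
noncomputable abbrev twoTermComplex : ChainComplex C ℕ :=
  ((ChainComplex.single₀ C).obj X).augment f Limits.zero_comp

theorem isZero_twoTermComplex_X (n : ℕ) : Limits.IsZero ((twoTermComplex f).X (n + 2)) :=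
  HomologicalComplex.isZero_single_obj_X (.down ℕ) 0 X (n + 1) n.succ_ne_zero

theorem exactAt_succ_twoTermComplex [Mono f] (n : ℕ) : (twoTermComplex f).ExactAt (n + 1) := by
  rw [HomologicalComplex.exactAt_iff' _ (n + 2) (n + 1) n (by simp) (by simp)]
  cases n with
  | zero => exact (ShortComplex.exact_iff_mono _ rfl).2 ‹Mono f›
  | succ n => exact ShortComplex.exact_of_isZero_X₂ _ (isZero_twoTermComplex_X f n)

end

variable [Abelian C] {S : ShortComplex C}

/-- The projective resolution `0 ⟶ S.X₁ ⟶ S.X₂` of `S.X₃` given by a short exact sequence `S`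
whose first two terms are projective. -/
noncomputable def twoTermResolution (hS : S.ShortExact) [Projective S.X₁] [Projective S.X₂] :
    ProjectiveResolution S.X₃ where
  complex := twoTermComplex S.f
  projective
    | 0 => ‹Projective S.X₂›
    | 1 => ‹Projective S.X₁›
    | n + 2 => (isZero_twoTermComplex_X S.f n).projective
  π := (ChainComplex.toSingle₀Equiv _ _).symm ⟨S.g, S.zero⟩
  quasiIso := ⟨fun
    | 0 => by
      rw [ChainComplex.quasiIsoAt₀_iff, ShortComplex.quasiIso_iff_of_zeros' _ rfl rfl rfl]
      refine (ShortComplex.exact_and_epi_g_iff_of_iso (S₂ := S) ?_).2 ⟨hS.exact, hS.epi_g⟩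
      refine ShortComplex.isoMk (Iso.refl _) (Iso.refl _) (Iso.refl _) ?_ ?_
      · exact (Category.id_comp _).trans (Category.comp_id _).symm
      · exact (Category.id_comp _).trans ((Category.comp_id _).trans
          (ChainComplex.toSingle₀Equiv_symm_apply_f_zero (C := twoTermComplex S.f) S.g S.zero)).symm
    | n + 1 => by
      have := hS.mono_f
      rw [quasiIsoAt_iff_exactAt' (hL := ChainComplex.exactAt_succ_single_obj ..)]
      exact exactAt_succ_twoTermComplex S.f n⟩

/-- `Ext¹(S.X₃, Y)` as the cokernel of `Hom(S.X₂, Y) → Hom(S.X₁, Y)`, for a short exact sequence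
`S` whose first two terms are projective. -/
noncomputable def extOneEquiv (R : Type w) [Ring R] [Linear R C] [EnoughProjectives C]
    (hS : S.ShortExact) [Projective S.X₁] [Projective S.X₂] (Y : C) :
    ((Ext R C 1).obj (op S.X₃)).obj Y ≃ₗ[R]
      (S.X₁ ⟶ Y) ⧸ LinearMap.range (Linear.leftComp R Y S.f) :=
  let P := twoTermResolution hS
  let K := P.complex.linearYonedaObj R Y
  have hg : (K.sc' 0 1 2).g = 0 := by
    ext (φ : _ ⟶ _)
    exact (isZero_twoTermComplex_X S.f 0).eq_of_src _ _
  (P.isoExt 1 Y ≪≫ ShortComplex.homologyMapIso (K.isoSc' 0 1 2 (by simp) (by simp)) ≪≫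
    (ShortComplex.LeftHomologyData.ofIsColimitCokernelCofork _ hg _
      (ModuleCat.cokernelIsColimit _)).homologyIso).toLinearEquiv

end CategoryTheory

section Ring

variable {R : Type*} [Ring R] {M N M' N' L : Type*}
  [AddCommGroup M] [Module R M] [AddCommGroup N] [Module R N]
  [AddCommGroup M'] [Module R M'] [AddCommGroup N'] [Module R N'] [AddCommGroup L] [Module R L]

/-- Isomorphic linear maps have isomorphic cokernels. -/
def quotientRangeCongr {f : M →ₗ[R] N} {f' : M' →ₗ[R] N'} (e₀ : M ≃ₗ[R] M') (e : N ≃ₗ[R] N')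
    (h : e.toLinearMap ∘ₗ f = f' ∘ₗ e₀.toLinearMap) :
    (N ⧸ LinearMap.range f) ≃ₗ[R] N' ⧸ LinearMap.range f' :=
  Submodule.Quotient.equiv _ _ e <| by
    rw [← LinearMap.range_comp, h, LinearEquiv.range_comp]

theorem exact_inl_comp_prodMap_id {f : M →ₗ[R] N} {g : N →ₗ[R] L} (hfg : Function.Exact f g) :
    Function.Exact (LinearMap.inl R N N' ∘ₗ f) (g.prodMap (LinearMap.id (M := N'))) := by
  rintro ⟨y, z⟩
  simp [hfg y, @eq_comm N' 0]

theorem nonempty_equiv_prod_quotient (N : Submodule R M) [Module.Projective R (M ⧸ N)] :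
    Nonempty (M ≃ₗ[R] N × (M ⧸ N)) := by
  obtain ⟨s, hs⟩ := Module.projective_lifting_property N.mkQ LinearMap.id N.mkQ_surjective
  exact ⟨((LinearMap.exact_subtype_mkQ N).splitSurjectiveEquiv N.subtype_injective ⟨s, hs⟩).1⟩

end Ring

section CommRing

variable {R : Type*} [CommRing R] {M N M' N' L P Q : Type*}
  [AddCommGroup M] [Module R M] [AddCommGroup N] [Module R N]
  [AddCommGroup M'] [Module R M'] [AddCommGroup N'] [Module R N']
  [AddCommGroup L] [Module R L] [AddCommGroup P] [Module R P] [AddCommGroup Q] [Module R Q]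

/-- The cokernel of `f` tensored with `Q`, computed by right exactness from a map `f'` isomorphic
to `f ⊗ Q`. -/
noncomputable def quotientRangeTensorEquiv {f : M →ₗ[R] N} {f' : M' →ₗ[R] N'}
    (e₀ : M ⊗[R] Q ≃ₗ[R] M') (e : N ⊗[R] Q ≃ₗ[R] N')
    (h : e.toLinearMap ∘ₗ f.rTensor Q = f' ∘ₗ e₀.toLinearMap) :
    (N ⧸ LinearMap.range f) ⊗[R] Q ≃ₗ[R] N' ⧸ LinearMap.range f' :=
  (rTensor.equiv Q (LinearMap.exact_map_mkQ_range f) (Submodule.mkQ_surjective _)).symm.trans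
    (quotientRangeCongr e₀ e h)

variable (Q) in
/-- `coker (N* → M*) ⊗ Q ≅ coker (Hom(N, Q) → Hom(M, Q))` for finitely generated projective modules
`M` and `N`, induced by `M* ⊗ Q ≅ Hom(M, Q)`. -/
noncomputable def quotientRangeDualMapTensorEquiv [Module.Finite R M] [Module.Projective R M]
    [Module.Finite R N] [Module.Projective R N] (f : M →ₗ[R] N) :
    (Module.Dual R M ⧸ LinearMap.range f.dualMap) ⊗[R] Q ≃ₗ[R]
      (M →ₗ[R] Q) ⧸ LinearMap.range (LinearMap.lcomp R Q f) :=
  quotientRangeTensorEquiv (dualTensorHomEquiv R N Q) (dualTensorHomEquiv R M Q)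
    (dualTensorHom_comp_rTensor_dualMap f)

theorem exact_compRight {i : M →ₗ[R] N} {p : N →ₗ[R] L} (hi : Function.Injective i)
    (hip : Function.Exact i p) :
    Function.Exact (i.compRight R (M := P)) (p.compRight R (M := P)) := by
  refine fun u => ⟨fun hu => ?_, ?_⟩
  · have hmem (x : P) : u x ∈ LinearMap.range i := (hip _).1 (LinearMap.congr_fun hu x)
    exact ⟨u.codRestrictOfInjective i hi hmem, u.codRestrictOfInjective_comp i hi hmem⟩
  · rintro ⟨v, rfl⟩
    exact LinearMap.ext fun x => hip.apply_apply_eq_zero (v x)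

theorem bijective_lcomp_of_smul_mem_range {f : M →ₗ[R] N} (hf : Function.Injective f) {a : R}
    (ha : ∀ y, a • y ∈ LinearMap.range f) (hQ : IsUnit (algebraMap R (Module.End R Q) a)) :
    Function.Bijective (LinearMap.lcomp R Q f) := by
  obtain ⟨h, hfh⟩ : ∃ h : N →ₗ[R] M, ∀ y, f (h y) = a • y :=
    ⟨(LinearMap.lsmul R N a).codRestrictOfInjective f hf ha,
      LinearMap.codRestrictOfInjective_comp_apply _ f hf ha⟩
  have hhf (x : M) : h (f x) = a • x := hf (by rw [hfh, map_smul])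
  obtain ⟨b, hba⟩ : ∃ b : Module.End R Q, ∀ z, b (a • z) = z :=
    ⟨_, Module.End.isUnit_inv_apply_apply_of_isUnit hQ⟩
  refine Function.bijective_iff_has_inverse.2 ⟨fun u => b ∘ₗ u ∘ₗ h, fun u => ?_, fun u => ?_⟩
  · ext y
    simp [hfh, hba]
  · ext x
    simp [hhf, hba]

end CommRing

section SnakeLemma

variable {R : Type*} [CommRing R] {M₁ M₂ M₃ N₁ N₂ N₃ K₃ : Type*}
  [AddCommGroup M₁] [Module R M₁] [AddCommGroup M₂] [Module R M₂] [AddCommGroup M₃] [Module R M₃]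
  [AddCommGroup N₁] [Module R N₁] [AddCommGroup N₂] [Module R N₂] [AddCommGroup N₃] [Module R N₃]
  [AddCommGroup K₃] [Module R K₃]

/-- The connecting map of the snake lemma from `ker i₃`, given as an embedding `ι : K₃ → M₃`, to
`coker i₁`, as an isomorphism when the middle vertical map `i₂` is bijective. -/
noncomputable def snakeEquiv {i₁ : M₁ →ₗ[R] N₁} {i₂ : M₂ →ₗ[R] N₂} {i₃ : M₃ →ₗ[R] N₃}
    {f₁ : M₁ →ₗ[R] M₂} {f₂ : M₂ →ₗ[R] M₃} (hf : Function.Exact f₁ f₂)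
    (hf₂ : Function.Surjective f₂) {g₁ : N₁ →ₗ[R] N₂} {g₂ : N₂ →ₗ[R] N₃}
    (hg₁ : Function.Injective g₁) (hg : Function.Exact g₁ g₂)
    (h₁ : g₁ ∘ₗ i₁ = i₂ ∘ₗ f₁) (h₂ : g₂ ∘ₗ i₂ = i₃ ∘ₗ f₂) (hi₂ : Function.Bijective i₂)
    {ι : K₃ →ₗ[R] M₃} (hι : Function.Injective ι) (hιi : Function.Exact ι i₃) :
    K₃ ≃ₗ[R] N₁ ⧸ LinearMap.range i₁ :=
  have hπ := LinearMap.exact_map_mkQ_range i₁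
  .ofBijective (SnakeLemma.δ' i₁ i₂ i₃ f₁ f₂ hf g₁ g₂ hg h₁ h₂ ι hιi _ hπ hf₂ hg₁)
    ⟨(LinearMap.exact_zero_iff_injective PUnit _).1 <|
      SnakeLemma.exact_δ'_right _ _ _ _ _ _ _ _ _ _ _ 0
        ((LinearMap.exact_zero_iff_injective PUnit _).2 hi₂.1) _ _ _ _ _ _ 0 (by simp) hι,
    (LinearMap.exact_zero_iff_surjective PUnit _).1 <|
      SnakeLemma.exact_δ'_left _ _ _ _ _ _ _ _ _ _ _ _ _ _ _ 0
        ((LinearMap.exact_zero_iff_surjective PUnit _).2 hi₂.2) _ _ 0 (by simp)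
        (Submodule.mkQ_surjective _)⟩

end SnakeLemma

section Resolution

variable {R : Type*} [CommRing R] {P₁ P₀ T M I L : Type*}
  [AddCommGroup P₁] [Module R P₁] [AddCommGroup P₀] [Module R P₀] [AddCommGroup T] [Module R T]
  [AddCommGroup M] [Module R M] [AddCommGroup I] [Module R I] [AddCommGroup L] [Module R L]

/-- `Hom(T, L)` as the cokernel of `Hom(P₀, M) → Hom(P₁, M)`, for exact sequences `P₁ → P₀ → T → 0`
and `0 → M → I → L → 0` such that `P₀` is projective and `Hom(P₀, I) → Hom(P₁, I)` is bijective. -/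
noncomputable def homEquivQuotientRangeLcomp [Module.Projective R P₀] {f : P₁ →ₗ[R] P₀}
    {g : P₀ →ₗ[R] T} (hfg : Function.Exact f g) (hg : Function.Surjective g) {i : M →ₗ[R] I}
    {p : I →ₗ[R] L} (hi : Function.Injective i) (hip : Function.Exact i p)
    (hp : Function.Surjective p) (hI : Function.Bijective (LinearMap.lcomp R I f)) :
    (T →ₗ[R] L) ≃ₗ[R] (P₁ →ₗ[R] M) ⧸ LinearMap.range (LinearMap.lcomp R M f) :=
  snakeEquiv (exact_compRight hi hip) (fun u => Module.projective_lifting_property p u hp)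
    (fun _ _ => (LinearMap.cancel_left hi).1) (exact_compRight hi hip) rfl rfl hI
    (LinearMap.lcomp_injective_of_surjective g hg)
    (LinearMap.exact_lcomp_of_exact_of_surjective L hfg hg)

theorem exists_mem_nonZeroDivisors_smul_mem_range [Module.Finite R T] (hT : Module.IsTorsion R T)
    {f : P₁ →ₗ[R] P₀} {g : P₀ →ₗ[R] T} (hfg : Function.Exact f g) :
    ∃ a ∈ nonZeroDivisors R, ∀ y, a • y ∈ LinearMap.range f := by
  obtain ⟨a, ha, ha'⟩ := Submodule.annihilator_top_inter_nonZeroDivisors hT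
  refine ⟨a, ha', fun y => (hfg _).1 ?_⟩
  rw [map_smul]
  exact Submodule.mem_annihilator.1 ha _ trivial

theorem bijective_lcomp_fractionRing_of_isTorsion [Module.Finite R T] (hT : Module.IsTorsion R T)
    {f : P₁ →ₗ[R] P₀} {g : P₀ →ₗ[R] T} (hf : Function.Injective f) (hfg : Function.Exact f g)
    (K : Type*) [CommRing K] [Algebra R K] [IsFractionRing R K] :
    Function.Bijective (LinearMap.lcomp R K f) := by
  obtain ⟨a, ha, haf⟩ := exists_mem_nonZeroDivisors_smul_mem_range hT hfg
  exact bijective_lcomp_of_smul_mem_range hf haf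
    (IsLocalizedModule.map_units (Algebra.linearMap R K) ⟨a, ha⟩)

/-- `Hom(T, K/R)` as the cokernel of `P₀* → P₁*`, for a finitely generated torsion module `T` and an
exact sequence `0 → P₁ → P₀ → T → 0` with `P₀` projective. -/
noncomputable def homFractionQuotientEquiv [Module.Projective R P₀] [Module.Finite R T]
    (hT : Module.IsTorsion R T) {f : P₁ →ₗ[R] P₀} {g : P₀ →ₗ[R] T} (hf : Function.Injective f)
    (hfg : Function.Exact f g) (hg : Function.Surjective g)
    (K : Type*) [CommRing K] [Algebra R K] [IsFractionRing R K] :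
    (T →ₗ[R] K ⧸ LinearMap.range (Algebra.linearMap R K)) ≃ₗ[R]
      Module.Dual R P₁ ⧸ LinearMap.range f.dualMap :=
  homEquivQuotientRangeLcomp hfg hg (IsFractionRing.injective R K)
    (LinearMap.exact_map_mkQ_range _) (Submodule.mkQ_surjective _)
    (bijective_lcomp_fractionRing_of_isTorsion hT hf hfg K)

theorem range_lcomp_inl_comp (f : P₁ →ₗ[R] P₀) :
    LinearMap.range (LinearMap.lcomp R M (LinearMap.inl R P₀ L ∘ₗ f)) =
      LinearMap.range (LinearMap.lcomp R M f) := by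
  have hinl : Function.Surjective (LinearMap.lcomp R M (LinearMap.inl R P₀ L)) := fun u =>
    ⟨u ∘ₗ LinearMap.fst R P₀ L, rfl⟩
  exact LinearMap.range_comp_of_range_eq_top (LinearMap.lcomp R M f) (LinearMap.range_eq_top.2 hinl)

end Resolution

section ModuleExt

universe v u

variable {R : Type u} [CommRing R] [Small.{v} R] {P₁ P₀ F M T : Type v}
  [AddCommGroup P₁] [Module R P₁] [Module.Projective R P₁]
  [AddCommGroup P₀] [Module R P₀] [Module.Projective R P₀]
  [AddCommGroup F] [Module R F] [Module.Projective R F]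
  [AddCommGroup M] [Module R M] [AddCommGroup T] [Module R T]

/-- `Ext¹(M, B)` as the cokernel of `Hom(P₀, B) → Hom(P₁, B)`, for a projective resolution
`0 → P₁ → P₀ → M → 0` of modules. -/
noncomputable def moduleExtOneEquiv {f : P₁ →ₗ[R] P₀} {g : P₀ →ₗ[R] M} (hf : Function.Injective f)
    (hfg : Function.Exact f g) (hg : Function.Surjective g)
    (B : Type v) [AddCommGroup B] [Module R B] :
    ((Ext R (ModuleCat.{v} R) 1).obj (op (ModuleCat.of R M))).obj (ModuleCat.of R B) ≃ₗ[R]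
      (P₁ →ₗ[R] B) ⧸ LinearMap.range (LinearMap.lcomp R B f) :=
  let S := ModuleCat.shortComplexOfCompEqZero f g hfg.linearMap_comp_eq_zero
  have hS : S.ShortExact := ModuleCat.shortComplex_shortExact S hfg hf hg
  have : Projective S.X₁ := (IsProjective.iff_projective (R := R) P₁).1 inferInstance
  have : Projective S.X₂ := (IsProjective.iff_projective (R := R) P₀).1 inferInstance
  (extOneEquiv R hS (ModuleCat.of R B)).trans
    (quotientRangeCongr ModuleCat.homLinearEquiv ModuleCat.homLinearEquiv rfl)

/-- `Ext¹(M, B)` for `M ≅ T × F` with `F` projective, computed from a projective resolution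
`0 → P₁ → P₀ → T → 0` of the other factor: `0 → P₁ → P₀ × F → M → 0` is then a resolution of `M`. -/
noncomputable def moduleExtOneEquivOfProd (e : M ≃ₗ[R] T × F) {f : P₁ →ₗ[R] P₀} {g : P₀ →ₗ[R] T}
    (hf : Function.Injective f) (hfg : Function.Exact f g) (hg : Function.Surjective g)
    (B : Type v) [AddCommGroup B] [Module R B] :
    ((Ext R (ModuleCat.{v} R) 1).obj (op (ModuleCat.of R M))).obj (ModuleCat.of R B) ≃ₗ[R]
      (P₁ →ₗ[R] B) ⧸ LinearMap.range (LinearMap.lcomp R B f) :=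
  have hexact : Function.Exact (LinearMap.inl R P₀ F ∘ₗ f)
      (e.symm.toLinearMap ∘ₗ g.prodMap LinearMap.id) :=
    e.symm.injective.comp_exact_iff_exact.2 (exact_inl_comp_prodMap_id hfg)
  (moduleExtOneEquiv (LinearMap.inl_injective.comp hf) hexact
      (e.symm.surjective.comp (hg.prodMap Function.surjective_id)) B).trans
    (Submodule.quotEquivOfEq _ _ (range_lcomp_inl_comp f))

end ModuleExt

universe u

theorem projective_of_finite_of_isTorsionFree (R M : Type*) [CommRing R] [IsDedekindDomain R]
    [AddCommGroup M] [Module R M] [Module.Finite R M] [Module.IsTorsionFree R M] :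
    Module.Projective R M :=
  have := Module.finitePresentation_of_finite R M
  Module.Flat.projective_of_finitePresentation

theorem ext_iso_hat_tensor_general (R : Type u) [CommRing R] [IsDedekindDomain R]
    (K : Type*) [CommRing K] [Algebra R K] [IsFractionRing R K]
    (A B : Type u) [AddCommGroup A] [Module R A] [AddCommGroup B] [Module R B]
    [Module.Finite R A] :
    Nonempty
      (((Ext R (ModuleCat.{u} R) 1).obj (op (ModuleCat.of R A))).obj (ModuleCat.of R B) ≃ₗ[R]
        ((Submodule.torsion R A →ₗ[R] (K ⧸ LinearMap.range (Algebra.linearMap R K))) ⊗[R] B)) := by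
  have := projective_of_finite_of_isTorsionFree R (A ⧸ Submodule.torsion R A)
  obtain ⟨e⟩ := nonempty_equiv_prod_quotient (Submodule.torsion R A)
  obtain ⟨n, g, hg⟩ := Module.Finite.exists_fin' R (Submodule.torsion R A)
  have := projective_of_finite_of_isTorsionFree R (LinearMap.ker g)
  have hinj := Submodule.subtype_injective (LinearMap.ker g)
  have hexact := LinearMap.exact_subtype_ker_map g
  have hT : Module.IsTorsion R (Submodule.torsion R A) := Submodule.torsion_isTorsion
  exact ⟨moduleExtOneEquivOfProd e hinj hexact hg B ≪≫ₗ
    (quotientRangeDualMapTensorEquiv B (LinearMap.ker g).subtype).symm ≪≫ₗ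
    TensorProduct.congr (homFractionQuotientEquiv hT hinj hexact hg K).symm (.refl R B)⟩

/-- Let `R` be a PID with field of fractions `K`, and `A`, `B` finitely generated
`R`-modules.  Then `Ext¹_R(A, B) ≅ Hom_R(T(A), K/R) ⊗_R B`, where `T(A)` is the
torsion submodule of `A`. -/
theorem ext_iso_hat_tensor (R : Type) [CommRing R] [IsDomain R]
    [IsPrincipalIdealRing R] (A B : Type) [AddCommGroup A] [Module R A]
    [AddCommGroup B] [Module R B] [Module.Finite R A] [Module.Finite R B] :
    Nonempty ((ext1 R A B) ≃ₗ[R]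
      ((Submodule.torsion R A →ₗ[R]
          (FractionRing R ⧸ LinearMap.range (Algebra.linearMap R (FractionRing R))))
        ⊗[R] B)) :=
  ext_iso_hat_tensor_general R (FractionRing R) A B
end

section
/- Let A and B be finite abelian p-groups regarded as abelian Lie rings over ℤ_p. The set of equivalence classes of central extensions 0 → B → E → A → 0 of ℤ_p-Lie rings (where the image of B is central in E) is in bijection with Hom(⋀²A, B) × Ext¹_{ℤ_p}(A, B). -/
open CategoryTheory Opposite

/-- A central extension `0 → B → E → A → 0` of Lie rings over `R`, where `A` and `B`
are `R`-modules regarded as abelian Lie rings: `E` is a Lie ring and Lie `R`-algebra,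
`ι` is injective, `π` is surjective, the sequence is exact, the image of `B` is
central in `E`, and `π` is a Lie homomorphism onto the abelian Lie ring `A`. -/
structure LieCentralExtension (R : Type) [CommRing R] (A B : Type) [AddCommGroup A]
    [Module R A] [AddCommGroup B] [Module R B] where
  E : Type
  [lieRing : LieRing E]
  [lieAlgebra : LieAlgebra R E]
  ι : B →ₗ[R] E
  π : E →ₗ[R] A
  inj : Function.Injective ι
  surj : Function.Surjective π
  exact : LinearMap.range ι = LinearMap.ker π
  central : ∀ (e : E) (b : B), ⁅e, ι b⁆ = 0
  π_bracket : ∀ e e' : E, π ⁅e, e'⁆ = 0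

attribute [instance] LieCentralExtension.lieRing LieCentralExtension.lieAlgebra

/-- Two central extensions are equivalent if there is an isomorphism of Lie rings
between the middle terms commuting with the maps from `B` and to `A`. -/
def LieCentralExtension.Equivalent {R : Type} [CommRing R] {A B : Type}
    [AddCommGroup A] [Module R A] [AddCommGroup B] [Module R B]
    (X X' : LieCentralExtension R A B) : Prop :=
  ∃ f : X.E ≃ₗ[R] X'.E, (∀ e e' : X.E, f ⁅e, e'⁆ = ⁅f e, f e'⁆) ∧
    (∀ b : B, f (X.ι b) = X'.ι b) ∧ (∀ e : X.E, X'.π (f e) = X.π e)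

/-!
The bracket of a central extension `E` descends to `⋀²A → B`, and it constrains the underlying
module extension in no way: over any module extension every `w : ⋀²A → B` defines a bracket
`⁅e, e'⁆ = ι (w (π e ∧ π e'))`, whose iterated brackets vanish, so that the Jacobi identity is
automatic.  Module extensions are classified by a presentation `q : P ↠ A` with `P` projective:
restricting a lift `P → E` of `q` to `ker q` gives a map `ker q → B`, well defined up to
restrictions of maps `P → B`, and `E` is recovered as the pushout of `P` along it.  When `q` is
the augmentation of a projective resolution, `Hom(ker q, B) / Hom(P, B)` is `Ext¹(A, B)`.
-/

section ExteriorSquare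

variable {R A B : Type*} [CommRing R] [AddCommGroup A] [Module R A] [AddCommGroup B] [Module R B]

/-- The universal alternating bilinear map `(a, b) ↦ a ∧ b`. -/
def wedge : A →ₗ[R] A →ₗ[R] ⋀[R]^2 A :=
  LinearMap.mk₂ R (fun a b ↦ exteriorPower.ιMulti R 2 ![a, b])
    (fun _ _ _ ↦ Subtype.ext (by simp [ExteriorAlgebra.ιMulti_apply, add_mul]))
    (fun _ _ _ ↦ Subtype.ext (by simp [ExteriorAlgebra.ιMulti_apply]))
    (fun _ _ _ ↦ Subtype.ext (by simp [ExteriorAlgebra.ιMulti_apply, mul_add]))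
    (fun _ _ _ ↦ Subtype.ext (by simp [ExteriorAlgebra.ιMulti_apply]))

theorem wedge_self (a : A) : wedge (R := R) a a = 0 :=
  (exteriorPower.ιMulti R 2).map_eq_zero_of_eq ![a, a] (i := 0) (j := 1) rfl (by decide)

/-- The linear map on the exterior square induced by an alternating bilinear map. -/
noncomputable def wedgeLift (w : A →ₗ[R] A →ₗ[R] B) (hw : w.IsAlt) : ⋀[R]^2 A →ₗ[R] B :=
  exteriorPower.alternatingMapLinearEquiv
    { toFun := fun v ↦ w (v 0) (v 1)
      map_update_add' := fun v i x y ↦ by fin_cases i <;> simp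
      map_update_smul' := fun v i r x ↦ by fin_cases i <;> simp
      map_eq_zero_of_eq' := fun v i j hv hij ↦ by
        fin_cases i <;> fin_cases j <;> simp_all [hw.self_eq_zero] }

theorem wedgeLift_wedge (w : A →ₗ[R] A →ₗ[R] B) (hw : w.IsAlt) (a b : A) :
    wedgeLift w hw (wedge a b) = w a b :=
  exteriorPower.alternatingMapLinearEquiv_apply_ιMulti _ _

theorem linearMap_ext_wedge {w w' : ⋀[R]^2 A →ₗ[R] B}
    (h : ∀ a b, w (wedge a b) = w' (wedge a b)) : w = w' := by
  refine exteriorPower.linearMap_ext (AlternatingMap.ext fun v ↦ ?_)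
  have hv : v = ![v 0, v 1] := List.ofFn_inj.mp rfl
  rw [hv]
  exact h _ _

end ExteriorSquare

section Presentation

variable {R A P : Type*} [CommRing R] [AddCommGroup A] [Module R A] [AddCommGroup P] [Module R P]

/-- `Hom(ker q, B)` modulo the restrictions of linear maps `P → B`.  It is the first Ext group of
`A` with values in `B` when `q : P → A` is surjective and `P` is projective. -/
abbrev ExtOfPresentation (q : P →ₗ[R] A) (B : Type*) [AddCommGroup B] [Module R B] : Type _ :=
  (LinearMap.ker q →ₗ[R] B) ⧸ LinearMap.range (LinearMap.lcomp R B (LinearMap.ker q).subtype)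

variable {B : Type*} [AddCommGroup B] [Module R B] {q : P →ₗ[R] A} (f : LinearMap.ker q →ₗ[R] B)

/-- The relations `(f k, 0) = (0, k)` imposed on `B × P` to form the pushout of `P` along
`f : ker q → B`. -/
def pushoutRel : Submodule R (B × P) :=
  LinearMap.range (f.prod (-(LinearMap.ker q).subtype))

variable {f} in
theorem mem_pushoutRel {b : B} {x : P} :
    (b, x) ∈ pushoutRel f ↔ ∃ k : LinearMap.ker q, f k = b ∧ -(k : P) = x := by
  simp only [pushoutRel, LinearMap.mem_range, LinearMap.prod_apply, Function.prod_apply,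
    LinearMap.neg_apply, Submodule.subtype_apply, Prod.mk.injEq]

/-- The map from the pushout of `P` along `f : ker q → B` to `A` that is `q` on `P` and zero
on `B`. -/
def pushoutProj : ((B × P) ⧸ pushoutRel f) →ₗ[R] A :=
  (pushoutRel f).liftQ (q ∘ₗ LinearMap.snd R B P) (by rintro _ ⟨k, rfl⟩; simp)

/-- The canonical map from `B` to the pushout of `P` along `f : ker q → B`. -/
def pushoutInl : B →ₗ[R] (B × P) ⧸ pushoutRel f :=
  (pushoutRel f).mkQ ∘ₗ LinearMap.inl R B P

/-- The canonical map from `P` to its pushout along `f : ker q → B`. -/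
def pushoutInr : P →ₗ[R] (B × P) ⧸ pushoutRel f :=
  (pushoutRel f).mkQ ∘ₗ LinearMap.inr R B P

theorem pushoutProj_comp_pushoutInl : pushoutProj f ∘ₗ pushoutInl f = 0 := by
  ext b
  simp [pushoutProj, pushoutInl]

theorem pushoutProj_comp_pushoutInr : pushoutProj f ∘ₗ pushoutInr f = q := by
  ext x
  simp [pushoutProj, pushoutInr]

theorem pushoutInl_comp : pushoutInl f ∘ₗ f = pushoutInr f ∘ₗ (LinearMap.ker q).subtype := by
  ext k
  refine (Submodule.Quotient.eq _).mpr (mem_pushoutRel.mpr ⟨k, ?_, ?_⟩) <;> simp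

theorem pushoutInl_injective : Function.Injective (pushoutInl f) := by
  refine (injective_iff_map_eq_zero _).mpr fun b hb ↦ ?_
  obtain ⟨k, rfl, hk⟩ := mem_pushoutRel.mp ((Submodule.Quotient.mk_eq_zero _).mp hb)
  rw [show k = 0 from Subtype.ext (neg_eq_zero.mp hk), map_zero]

theorem pushoutProj_surjective (hq : Function.Surjective q) :
    Function.Surjective (pushoutProj f) := by
  rw [← pushoutProj_comp_pushoutInr f] at hq
  exact .of_comp (g := pushoutInr f) hq

theorem range_pushoutInl_eq_ker_pushoutProj :
    LinearMap.range (pushoutInl f) = LinearMap.ker (pushoutProj f) := by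
  refine le_antisymm (LinearMap.range_le_ker_iff.mpr (pushoutProj_comp_pushoutInl f)) fun e he ↦ ?_
  obtain ⟨⟨b, x⟩, rfl⟩ := (pushoutRel f).mkQ_surjective e
  have hx : x ∈ LinearMap.ker q := by simpa [pushoutProj] using he
  have hx' : pushoutInl f (f ⟨x, hx⟩) = pushoutInr f x := LinearMap.congr_fun (pushoutInl_comp f) _
  refine ⟨b + f ⟨x, hx⟩, ?_⟩
  rw [map_add, hx', pushoutInl, pushoutInr, LinearMap.comp_apply, LinearMap.comp_apply, ← map_add]
  simp

end Presentation

namespace LieCentralExtension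

variable {R : Type} [CommRing R] {A B : Type} [AddCommGroup A] [Module R A]
  [AddCommGroup B] [Module R B] (X X' : LieCentralExtension R A B)

theorem π_ι (b : B) : X.π (X.ι b) = 0 :=
  X.exact.le (LinearMap.mem_range_self X.ι b)

theorem exists_ι_eq {e : X.E} (he : X.π e = 0) : ∃ b, X.ι b = e :=
  X.exact.ge he

theorem exists_ι_comp_eq {M : Type*} [AddCommGroup M] [Module R M] {g : M →ₗ[R] X.E}
    (hg : X.π ∘ₗ g = 0) : ∃ h : M →ₗ[R] B, X.ι ∘ₗ h = g := by
  choose h hh using fun m ↦ X.exists_ι_eq (LinearMap.congr_fun hg m)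
  refine ⟨⟨⟨h, fun x y ↦ X.inj ?_⟩, fun r x ↦ X.inj ?_⟩, LinearMap.ext hh⟩
  · simp only [hh, map_add]
  · simp only [hh, map_smul, RingHom.id_apply]

section Form

theorem ι_lie (b : B) (e : X.E) : ⁅X.ι b, e⁆ = 0 := by
  rw [← lie_skew, X.central, neg_zero]

theorem lie_eq_lie_of_π_eq {e₁ e₂ e₁' e₂' : X.E} (h : X.π e₁ = X.π e₂) (h' : X.π e₁' = X.π e₂') :
    ⁅e₁, e₁'⁆ = ⁅e₂, e₂'⁆ := by
  obtain ⟨b, hb⟩ := X.exists_ι_eq (LinearMap.sub_mem_ker_iff.mpr h)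
  obtain ⟨b', hb'⟩ := X.exists_ι_eq (LinearMap.sub_mem_ker_iff.mpr h')
  rw [eq_sub_iff_add_eq] at hb hb'
  rw [← hb, ← hb']
  simp only [add_lie, lie_add, X.central, X.ι_lie, zero_add]

theorem exists_ι_eq_lie : ∃ c : A → A → B, ∀ e e' : X.E, X.ι (c (X.π e) (X.π e')) = ⁅e, e'⁆ := by
  choose s hs using X.surj
  choose c hc using fun a a' ↦ X.exists_ι_eq (X.π_bracket (s a) (s a'))
  exact ⟨c, fun e e' ↦ (hc _ _).trans (X.lie_eq_lie_of_π_eq (hs _) (hs _))⟩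

theorem exists_form :
    ∃ w : ⋀[R]^2 A →ₗ[R] B, ∀ e e' : X.E, X.ι (w (wedge (X.π e) (X.π e'))) = ⁅e, e'⁆ := by
  obtain ⟨c, hc⟩ := X.exists_ι_eq_lie
  let w : A →ₗ[R] A →ₗ[R] B := LinearMap.mk₂ R c
    (X.surj.forall₃.mpr fun e₁ e₂ e ↦ X.inj <| by
      simp only [← map_add X.π, map_add X.ι, hc, add_lie])
    (fun r ↦ X.surj.forall₂.mpr fun e e' ↦ X.inj <| by
      simp only [← map_smul X.π, map_smul X.ι, hc, smul_lie])
    (X.surj.forall₃.mpr fun e e₁ e₂ ↦ X.inj <| by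
      simp only [← map_add X.π, map_add X.ι, hc, lie_add])
    (fun r ↦ X.surj.forall₂.mpr fun e e' ↦ X.inj <| by
      simp only [← map_smul X.π, map_smul X.ι, hc, lie_smul])
  have hw : w.IsAlt := X.surj.forall.mpr fun e ↦ X.inj <| by
    rw [LinearMap.mk₂_apply, hc, lie_self, map_zero]
  exact ⟨wedgeLift w hw, fun e e' ↦ by rw [wedgeLift_wedge, LinearMap.mk₂_apply, hc]⟩

/-- The linear map `⋀²A → B` to which the bracket of a central extension descends. -/
noncomputable def form : ⋀[R]^2 A →ₗ[R] B := X.exists_form.choose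

theorem ι_form_wedge (e e' : X.E) : X.ι (X.form (wedge (X.π e) (X.π e'))) = ⁅e, e'⁆ :=
  X.exists_form.choose_spec e e'

variable {X X'}

theorem form_eq {w : ⋀[R]^2 A →ₗ[R] B}
    (hw : ∀ e e' : X.E, X.ι (w (wedge (X.π e) (X.π e'))) = ⁅e, e'⁆) : X.form = w :=
  linearMap_ext_wedge <| X.surj.forall₂.mpr fun e e' ↦ X.inj <| by rw [ι_form_wedge, hw]

theorem Equivalent.form_eq_form (h : X.Equivalent X') : X.form = X'.form := by
  obtain ⟨φ, hlie, hι, hπ⟩ := h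
  refine form_eq fun e e' ↦ φ.injective ?_
  rw [hι, hlie, ← hπ, ← hπ, ι_form_wedge]

end Form

section Cocycle

variable {P : Type*} [AddCommGroup P] [Module R P] {q : P →ₗ[R] A} {f f' : LinearMap.ker q →ₗ[R] B}

/-- `f : ker q → B` is the restriction to `ker q` of a lift of `q : P → A` to the extension. -/
def IsCocycle (f : LinearMap.ker q →ₗ[R] B) : Prop :=
  ∃ l : P →ₗ[R] X.E, X.π ∘ₗ l = q ∧ X.ι ∘ₗ f = l ∘ₗ (LinearMap.ker q).subtype

theorem exists_isCocycle [Module.Projective R P] (q : P →ₗ[R] A) :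
    ∃ f : LinearMap.ker q →ₗ[R] B, X.IsCocycle f := by
  obtain ⟨l, hl⟩ := Module.projective_lifting_property X.π q X.surj
  have hker : X.π ∘ₗ l ∘ₗ (LinearMap.ker q).subtype = 0 := by
    rw [← LinearMap.comp_assoc, hl, LinearMap.comp_ker_subtype]
  obtain ⟨f, hf⟩ := X.exists_ι_comp_eq hker
  exact ⟨f, l, hl, hf⟩

variable {X X'}

theorem IsCocycle.sub_mem_range_lcomp (hf : X.IsCocycle f) (hf' : X.IsCocycle f') :
    f - f' ∈ LinearMap.range (LinearMap.lcomp R B (LinearMap.ker q).subtype) := by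
  obtain ⟨l, hl, hlf⟩ := hf
  obtain ⟨l', hl', hlf'⟩ := hf'
  obtain ⟨h, hh⟩ := X.exists_ι_comp_eq (g := l - l') (by rw [LinearMap.comp_sub, hl, hl', sub_self])
  refine ⟨h, (LinearMap.cancel_left X.inj).mp ?_⟩
  rw [LinearMap.lcomp_apply', ← LinearMap.comp_assoc, hh, LinearMap.comp_sub, hlf, hlf',
    LinearMap.sub_comp]

theorem IsCocycle.of_sub_mem_range_lcomp (hf : X.IsCocycle f)
    (h : f - f' ∈ LinearMap.range (LinearMap.lcomp R B (LinearMap.ker q).subtype)) :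
    X.IsCocycle f' := by
  obtain ⟨l, hl, hlf⟩ := hf
  obtain ⟨h, hh⟩ := h
  refine ⟨l - X.ι ∘ₗ h, ?_, ?_⟩
  · ext x
    simp [← hl, π_ι]
  · rw [LinearMap.lcomp_apply'] at hh
    rw [LinearMap.sub_comp, ← hlf, LinearMap.comp_assoc, hh, LinearMap.comp_sub, sub_sub_cancel]

theorem Equivalent.isCocycle (h : X.Equivalent X') (hf : X.IsCocycle f) : X'.IsCocycle f := by
  obtain ⟨φ, -, hι, hπ⟩ := h
  obtain ⟨l, hl, hlf⟩ := hf
  refine ⟨φ.toLinearMap ∘ₗ l, ?_, ?_⟩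
  · ext x
    simp [hπ, ← hl]
  · rw [LinearMap.comp_assoc, ← hlf]
    ext k
    simp [hι]

theorem ker_ι_coprod {l : P →ₗ[R] X.E} (hl : X.π ∘ₗ l = q)
    (hf : X.ι ∘ₗ f = l ∘ₗ (LinearMap.ker q).subtype) :
    LinearMap.ker (X.ι.coprod l) = pushoutRel f := by
  have hl' (x : P) : X.π (l x) = q x := LinearMap.congr_fun hl x
  have hf' (k : LinearMap.ker q) : X.ι (f k) = l k := LinearMap.congr_fun hf k
  ext ⟨b, x⟩
  rw [LinearMap.mem_ker, LinearMap.coprod_apply, mem_pushoutRel]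
  constructor
  · intro h
    have hx : q x = 0 := by simpa [π_ι, hl'] using congrArg X.π h
    refine ⟨-⟨x, hx⟩, X.inj ?_, by simp⟩
    rw [hf', eq_neg_of_add_eq_zero_left h]
    simp
  · rintro ⟨k, rfl, rfl⟩
    rw [hf', map_neg, add_neg_cancel]

theorem ι_coprod_surjective {l : P →ₗ[R] X.E} (hq : Function.Surjective q) (hl : X.π ∘ₗ l = q) :
    Function.Surjective (X.ι.coprod l) := by
  intro e
  obtain ⟨x, hx⟩ := hq (X.π e)
  obtain ⟨b, hb⟩ := X.exists_ι_eq (e := e - l x) (by simp [← hx, ← hl])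
  exact ⟨(b, x), by simp [hb]⟩

theorem IsCocycle.exists_linearEquiv (hq : Function.Surjective q) (hf : X.IsCocycle f)
    (hf' : X'.IsCocycle f) :
    ∃ φ : X.E ≃ₗ[R] X'.E, (∀ b, φ (X.ι b) = X'.ι b) ∧ ∀ e, X'.π (φ e) = X.π e := by
  obtain ⟨l, hl, hlf⟩ := hf
  obtain ⟨l', hl', hlf'⟩ := hf'
  have hker : LinearMap.ker (X.ι.coprod l) = LinearMap.ker (X'.ι.coprod l') :=
    (ker_ι_coprod hl hlf).trans (ker_ι_coprod hl' hlf').symm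
  have hsurj := ι_coprod_surjective hq hl
  let φ : X.E ≃ₗ[R] X'.E := ((X.ι.coprod l).quotKerEquivOfSurjective hsurj).symm ≪≫ₗ
    Submodule.quotEquivOfEq _ _ hker ≪≫ₗ
    (X'.ι.coprod l').quotKerEquivOfSurjective (ι_coprod_surjective hq hl')
  have hφ (b : B) (x : P) : φ (X.ι b + l x) = X'.ι b + l' x := by
    have hsymm : ((X.ι.coprod l).quotKerEquivOfSurjective hsurj).symm (X.ι b + l x) =
        Submodule.Quotient.mk (b, x) := by
      rw [LinearEquiv.symm_apply_eq]
      simp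
    simp [φ, hsymm]
  refine ⟨φ, fun b ↦ by simpa using hφ b 0, fun e ↦ ?_⟩
  obtain ⟨⟨b, x⟩, rfl⟩ := hsurj e
  have hlx : X'.π (l' x) = X.π (l x) := LinearMap.congr_fun (hl'.trans hl.symm) x
  simp [hφ, π_ι, hlx]

theorem equivalent_of_form_eq_of_isCocycle (hq : Function.Surjective q) (hform : X.form = X'.form)
    (hf : X.IsCocycle f) (hf' : X'.IsCocycle f) : X.Equivalent X' := by
  obtain ⟨φ, hι, hπ⟩ := hf.exists_linearEquiv hq hf'
  refine ⟨φ, fun e e' ↦ ?_, hι, hπ⟩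
  rw [← X.ι_form_wedge, ← X'.ι_form_wedge, hι, hπ, hπ, hform]

variable (X) in
/-- The class, modulo restrictions of maps `P → B`, of the cocycles of an extension. -/
noncomputable def cocycleClass [Module.Projective R P] (q : P →ₗ[R] A) : ExtOfPresentation q B :=
  Submodule.Quotient.mk (X.exists_isCocycle q).choose

theorem cocycleClass_eq_mk_iff [Module.Projective R P] :
    X.cocycleClass q = Submodule.Quotient.mk f ↔ X.IsCocycle f := by
  have hchoose := (X.exists_isCocycle q).choose_spec
  exact (Submodule.Quotient.eq _).trans
    ⟨hchoose.of_sub_mem_range_lcomp, hchoose.sub_mem_range_lcomp⟩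

theorem equivalent_iff [Module.Projective R P] (hq : Function.Surjective q) :
    X.Equivalent X' ↔ X.form = X'.form ∧ X.cocycleClass q = X'.cocycleClass q := by
  obtain ⟨f, hf⟩ := X.exists_isCocycle q
  rw [cocycleClass_eq_mk_iff.mpr hf, eq_comm (b := X'.cocycleClass q), cocycleClass_eq_mk_iff]
  constructor
  · exact fun h ↦ ⟨h.form_eq_form, h.isCocycle hf⟩
  · exact fun ⟨hform, hf'⟩ ↦ equivalent_of_form_eq_of_isCocycle hq hform hf hf'

end Cocycle

section Construction

/-- The central extension on a given module extension with the bracket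
`⁅e, e'⁆ = ι (w (π e ∧ π e'))`. -/
def ofForm {E : Type} [AddCommGroup E] [Module R E] (ι : B →ₗ[R] E) (π : E →ₗ[R] A)
    (inj : Function.Injective ι) (surj : Function.Surjective π)
    (exact : LinearMap.range ι = LinearMap.ker π) (w : ⋀[R]^2 A →ₗ[R] B) :
    LieCentralExtension R A B :=
  have π_ι (b : B) : π (ι b) = 0 := exact.le (LinearMap.mem_range_self ι b)
  letI : LieRing E :=
    { bracket := fun e e' ↦ ι (w (wedge (π e) (π e')))
      add_lie := fun x y z ↦ by simp only [map_add, LinearMap.add_apply]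
      lie_add := fun x y z ↦ by simp only [map_add]
      lie_self := fun x ↦ by simp only [wedge_self, map_zero]
      leibniz_lie := fun x y z ↦ by simp only [π_ι, map_zero, LinearMap.zero_apply, add_zero] }
  letI : LieAlgebra R E :=
    { lie_smul := fun r x y ↦ show ι (w (wedge (π x) (π (r • y)))) = r • ι (w (wedge (π x) (π y)))
        by simp only [map_smul] }
  { E, ι, π, inj, surj, exact
    central := fun e b ↦ show ι (w (wedge (π e) (π (ι b)))) = 0 by simp only [π_ι, map_zero]
    π_bracket := fun e e' ↦ π_ι _ }

variable {P : Type} [AddCommGroup P] [Module R P] {q : P →ₗ[R] A}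

theorem exists_form_eq_and_isCocycle (hq : Function.Surjective q) (w : ⋀[R]^2 A →ₗ[R] B)
    (f : LinearMap.ker q →ₗ[R] B) :
    ∃ X : LieCentralExtension R A B, X.form = w ∧ X.IsCocycle f :=
  ⟨ofForm (pushoutInl f) (pushoutProj f) (pushoutInl_injective f) (pushoutProj_surjective f hq)
      (range_pushoutInl_eq_ker_pushoutProj f) w,
    form_eq fun _ _ ↦ rfl, pushoutInr f, pushoutProj_comp_pushoutInr f, pushoutInl_comp f⟩

/-- Equivalence classes of central extensions, classified by the form and the cocycle class. -/
noncomputable def quotEquivOfPresentation [Module.Projective R P] (hq : Function.Surjective q) :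
    Quot (Equivalent (R := R) (A := A) (B := B)) ≃ (⋀[R]^2 A →ₗ[R] B) × ExtOfPresentation q B :=
  Equiv.ofBijective
    (Quot.lift (fun X ↦ (X.form, X.cocycleClass q))
      fun _ _ h ↦ Prod.ext_iff.mpr ((equivalent_iff hq).mp h)) <| by
    constructor
    · rintro ⟨X⟩ ⟨X'⟩ h
      exact Quot.sound ((equivalent_iff hq).mpr (Prod.ext_iff.mp h))
    · rintro ⟨w, ⟨f⟩⟩
      obtain ⟨X, hform, hf⟩ := exists_form_eq_and_isCocycle hq w f
      exact ⟨Quot.mk _ X, Prod.ext hform (cocycleClass_eq_mk_iff.mpr hf)⟩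

end Construction

end LieCentralExtension

section Ext

universe u v

/-- The homology of a short complex of modules, computed from a map `φ` identifying `M` with the
cycles and the factorization `ρ` of the first differential through `φ`. -/
noncomputable def homologyLinearEquivOfCycles {R : Type u} [Ring R]
    (S : ShortComplex (ModuleCat.{v} R)) {M : Type*} [AddCommGroup M] [Module R M]
    (φ : M →ₗ[R] S.X₂) (hφ : Function.Injective φ)
    (hφg : Function.Exact φ S.g.hom) (ρ : S.X₁ →ₗ[R] M)
    (hρ : φ ∘ₗ ρ = S.f.hom) : S.homology ≃ₗ[R] M ⧸ LinearMap.range ρ :=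
  let cyclesEquiv : M ≃ₗ[R] LinearMap.ker S.g.hom :=
    LinearEquiv.ofInjective φ hφ ≪≫ₗ LinearEquiv.ofEq _ _ hφg.linearMap_ker_eq.symm
  have hcycles : cyclesEquiv.toLinearMap ∘ₗ ρ = S.moduleCatToCycles :=
    LinearMap.ext fun x ↦ Subtype.ext (LinearMap.congr_fun hρ x)
  S.moduleCatHomologyIso.toLinearEquiv ≪≫ₗ
    (Submodule.Quotient.equiv (LinearMap.range ρ) (LinearMap.range S.moduleCatToCycles) cyclesEquiv
      ((LinearMap.range_comp _ _).symm.trans (congrArg LinearMap.range hcycles))).symm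

variable {R : Type u} [CommRing R] {X : ModuleCat.{u} R} (P : ProjectiveResolution X)

/-- The augmentation `P₀ → X` of a projective resolution, as a linear map. -/
noncomputable def augmentation : P.complex.X 0 →ₗ[R] X := (P.π.f 0).hom

theorem augmentation_surjective : Function.Surjective (augmentation P) :=
  (ModuleCat.epi_iff_surjective (P.π.f 0)).mp inferInstance

theorem exact_d_augmentation : Function.Exact (P.complex.d 1 0).hom (augmentation P) :=
  (ShortComplex.ShortExact.moduleCat_exact_iff_function_exact _).mp P.exact₀

/-- The first differential `P₁ → P₀` of a projective resolution, with values in the kernel of the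
augmentation. -/
noncomputable def toKerAugmentation : P.complex.X 1 →ₗ[R] LinearMap.ker (augmentation P) :=
  (P.complex.d 1 0).hom.codRestrict _ (exact_d_augmentation P).apply_apply_eq_zero

theorem toKerAugmentation_surjective : Function.Surjective (toKerAugmentation P) := by
  rintro ⟨x, hx⟩
  obtain ⟨y, rfl⟩ := (exact_d_augmentation P x).mp hx
  exact ⟨y, rfl⟩

theorem exact_d_toKerAugmentation :
    Function.Exact (P.complex.d 2 1).hom (toKerAugmentation P) := by
  have hexact : Function.Exact (P.complex.d 2 1).hom (P.complex.d 1 0).hom :=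
    (ShortComplex.ShortExact.moduleCat_exact_iff_function_exact _).mp (P.exact_succ 0)
  exact fun y ↦ Subtype.ext_iff.trans (hexact y)

/-- `Ext¹` as `Hom(ker (P₀ → X), Y)` modulo `Hom(P₀, Y)`: by left exactness of `Hom(-, Y)`, the
`1`-cocycles of `Hom(P, Y)` are the linear maps `ker (P₀ → X) → Y`. -/
noncomputable def extLinearEquivOfResolution (Y : ModuleCat.{u} R) :
    ((Ext R (ModuleCat.{u} R) 1).obj (op X)).obj Y ≃ₗ[R] ExtOfPresentation (augmentation P) Y :=
  let K := P.complex.linearYonedaObj R Y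
  let cocycleMap : (LinearMap.ker (augmentation P) →ₗ[R] Y) →ₗ[R] (P.complex.X 1 ⟶ Y) :=
    ModuleCat.homLinearEquiv.symm.toLinearMap ∘ₗ LinearMap.lcomp R Y (toKerAugmentation P)
  let restriction : (P.complex.X 0 ⟶ Y) →ₗ[R] (LinearMap.ker (augmentation P) →ₗ[R] Y) :=
    LinearMap.lcomp R Y (LinearMap.ker (augmentation P)).subtype ∘ₗ
      ModuleCat.homLinearEquiv.toLinearMap
  have hinj : Function.Injective cocycleMap :=
    ModuleCat.homLinearEquiv.symm.injective.comp
      (LinearMap.lcomp_injective_of_surjective _ (toKerAugmentation_surjective P))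
  have hexact : Function.Exact cocycleMap (K.sc' 0 1 2).g.hom := fun (φ : P.complex.X 1 ⟶ Y) ↦
    ModuleCat.hom_ext_iff.trans <|
      (LinearMap.exact_lcomp_of_exact_of_surjective Y (exact_d_toKerAugmentation P)
        (toKerAugmentation_surjective P) φ.hom).trans <|
      exists_congr fun _ ↦ ModuleCat.hom_ext_iff.symm
  (P.isoExt 1 Y ≪≫ ShortComplex.homologyMapIso (K.isoSc' 0 1 2 (by simp) (by simp))).toLinearEquiv
    ≪≫ₗ homologyLinearEquivOfCycles (K.sc' 0 1 2) cocycleMap hinj hexact restriction rfl ≪≫ₗ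
    Submodule.quotEquivOfEq _ _ (LinearEquiv.range_comp _ _)

end Ext

theorem central_extensions_classification_general (R : Type) [CommRing R] (A B : Type)
    [AddCommGroup A] [Module R A] [AddCommGroup B] [Module R B] :
    Nonempty (Quot (LieCentralExtension.Equivalent (R := R) (A := A) (B := B)) ≃
      ((⋀[R]^2 A →ₗ[R] B) × ext1 R A B)) := by
  let P := projectiveResolution (ModuleCat.of R A)
  have : Module.Projective R (P.complex.X 0) := (IsProjective.iff_projective _).mpr (P.projective 0)
  exact ⟨(LieCentralExtension.quotEquivOfPresentation (augmentation_surjective P)).trans <|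
    (Equiv.refl _).prodCongr (extLinearEquivOfResolution P (ModuleCat.of R B)).symm.toEquiv⟩

/-- Let `A` and `B` be finite abelian `p`-groups regarded as abelian Lie rings over
`ℤ_p`.  The set of equivalence classes of central extensions `0 → B → E → A → 0` of
`ℤ_p`-Lie rings is in bijection with `Hom(⋀²A, B) × Ext¹_{ℤ_p}(A, B)`. -/
theorem central_extensions_classification (p : ℕ) [Fact p.Prime]
    (A B : Type) [AddCommGroup A] [Module (PadicInt p) A] [Finite A]
    [AddCommGroup B] [Module (PadicInt p) B] [Finite B] :
    Nonempty (Quot (LieCentralExtension.Equivalent (R := PadicInt p) (A := A) (B := B)) ≃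
      (((⋀[PadicInt p]^2 A) →ₗ[PadicInt p] B) × ext1 (PadicInt p) A B)) := by
  exact central_extensions_classification_general _ A B
end
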